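/- Let M be a positive integer, g, ĝ ∈ ℝ^M, and T, T̂ be M×M real matrices with ‖T‖∞ < 1 and ‖T̂‖∞ < 1. Let x be the unique solution of x = g + T·x and x̂ the unique solution of x̂ = ĝ + T̂·x̂, and assume ‖x̂‖∞ ≤ 1. If ε_T ≥ 0 and ε_g ≥ 0 are such that |T̂_{s,s'} − T_{s,s'}| ≤ ε_T for all s, s' and |ĝ_s − g_s| ≤ ε_g for all s, then ‖x̂ − x‖∞ ≤ (M·ε_T + ε_g)/(1 − ‖T‖∞). -/

import Mathlib

/-- The vector sup norm `‖x‖∞ = max_s |x_s|`. -/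
noncomputable def vecNormInf {M : ℕ} (x : Fin M → ℝ) : ℝ := ⨆ s, |x s|

/-- The matrix operator norm induced by the vector sup norm,
i.e. the maximum absolute row sum `max_s ∑_{s'} |T_{s,s'}|`. -/
noncomputable def matNormInf {M : ℕ} (T : Matrix (Fin M) (Fin M) ℝ) : ℝ :=
  ⨆ s, ∑ s', |T s s'|

theorem abs_apply_le_vecNormInf {M : ℕ} (x : Fin M → ℝ) (s : Fin M) :
    |x s| ≤ vecNormInf x :=
  le_ciSup (f := fun s => |x s|) (Set.finite_range _).bddAbove s

theorem row_sum_abs_le_matNormInf {M : ℕ} (T : Matrix (Fin M) (Fin M) ℝ) (s : Fin M) :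
    ∑ s', |T s s'| ≤ matNormInf T :=
  le_ciSup (f := fun s => ∑ s', |T s s'|) (Set.finite_range _).bddAbove s

theorem vecNormInf_nonneg {M : ℕ} (x : Fin M → ℝ) : 0 ≤ vecNormInf x :=
  Real.iSup_nonneg fun _ => abs_nonneg _

theorem abs_mulVec_apply_le {M : ℕ} (T : Matrix (Fin M) (Fin M) ℝ) (x : Fin M → ℝ)
    (s : Fin M) : |T.mulVec x s| ≤ (∑ s', |T s s'|) * vecNormInf x := by
  rw [Matrix.mulVec, dotProduct, Finset.sum_mul]
  refine (Finset.abs_sum_le_sum_abs _ _).trans (Finset.sum_le_sum fun s' _ => ?_)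
  rw [abs_mul]
  exact mul_le_mul_of_nonneg_left (abs_apply_le_vecNormInf x s') (abs_nonneg _)

/-- Deterministic error bound for the Expected Threat model: if the entrywise
estimation errors of `T` and `g` are bounded by `ε_T` and `ε_g`, then
`‖x̂ - x‖∞ ≤ (M·ε_T + ε_g)/(1 - ‖T‖∞)`. -/
theorem stmt_7 (M : ℕ) (hM : 0 < M) (g ghat : Fin M → ℝ)
    (T That : Matrix (Fin M) (Fin M) ℝ)
    (hT : matNormInf T < 1) (hThat : matNormInf That < 1)
    (x xhat : Fin M → ℝ)
    (hx : x = g + T.mulVec x) (hxhat : xhat = ghat + That.mulVec xhat)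
    (hxhat1 : vecNormInf xhat ≤ 1)
    (εT εg : ℝ) (hεT : 0 ≤ εT) (hεg : 0 ≤ εg)
    (hTent : ∀ s s', |That s s' - T s s'| ≤ εT)
    (hgent : ∀ s, |ghat s - g s| ≤ εg) :
    vecNormInf (xhat - x) ≤ (M * εT + εg) / (1 - matNormInf T) := by
  have : Nonempty (Fin M) := ⟨⟨0, hM⟩⟩
  rw [le_div_iff₀ (sub_pos.2 hT)]
  suffices h : vecNormInf (xhat - x) ≤
      M * εT + εg + matNormInf T * vecNormInf (xhat - x) by linarith
  refine ciSup_le fun s => ?_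
  have decomposition : (xhat - x) s =
      (That - T).mulVec xhat s + (ghat s - g s) + T.mulVec (xhat - x) s := by
    have hs := congrFun hx s
    have hshat := congrFun hxhat s
    simp only [Pi.add_apply] at hs hshat
    simp only [Matrix.sub_mulVec, Matrix.mulVec_sub, Pi.sub_apply]
    linarith
  have matrix_error : |(That - T).mulVec xhat s| ≤ M * εT := by
    have row_error : ∑ s', |(That - T) s s'| ≤ M * εT := by
      simpa using Finset.sum_le_card_nsmul Finset.univ _ εT fun s' _ => hTent s s'
    calc |(That - T).mulVec xhat s|
        ≤ (∑ s', |(That - T) s s'|) * vecNormInf xhat := abs_mulVec_apply_le _ _ _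
      _ ≤ (∑ s', |(That - T) s s'|) * 1 := by gcongr
      _ ≤ M * εT := by rwa [mul_one]
  have propagated_error :
      |T.mulVec (xhat - x) s| ≤ matNormInf T * vecNormInf (xhat - x) :=
    (abs_mulVec_apply_le _ _ _).trans
      (mul_le_mul_of_nonneg_right (row_sum_abs_le_matNormInf T s) (vecNormInf_nonneg _))
  rw [decomposition]
  exact (abs_add_three _ _ _).trans
    (add_le_add (add_le_add matrix_error (hgent s)) propagated_error)
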